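/- arXiv:1509.01645 — 2 statements merged into one kernel-verified Lean document; each statement's English description precedes it below -/
import Mathlib

section
/- Let p be a prime and n ≥ 2 a natural number, and let G = ℤ_p^n be the direct product of n copies of the additive group of the p-adic integers, with the product topology. Then G has no test elements: for every x ∈ G there exists a continuous group homomorphism φ : G → G with φ(x) = x that is not bijective. -/
theorem stmt_7 {p : ℕ} [Fact p.Prime] {n : ℕ} (hn : 2 ≤ n) :
    ∀ x : Fin n → ℤ_[p],
      ∃ φ : (Fin n → ℤ_[p]) →+ (Fin n → ℤ_[p]),
        Continuous φ ∧ φ x = x ∧ ¬ Function.Bijective φ := by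
  intro x
  have : Nontrivial (Fin n) := Fin.nontrivial_iff_two_le.mpr hn
  obtain ⟨i, hi⟩ := Finite.exists_max (fun i => ‖x i‖)
  have hd : ∀ j, ∃ c : ℤ_[p], x j = x i * c := by
    intro j
    by_cases h0 : x i = 0
    · have h := hi j
      simp only [h0, norm_zero] at h
      exact ⟨0, by simpa using h⟩
    · have hpos : 0 < ‖x i‖ := norm_pos_iff.mpr h0
      have h0' : (x i : ℚ_[p]) ≠ 0 := by
        intro h; exact h0 (Subtype.ext h)
      refine ⟨⟨(x j : ℚ_[p]) / (x i : ℚ_[p]), ?_⟩, ?_⟩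
      · rw [norm_div]
        exact div_le_one_of_le₀ (hi j) (norm_nonneg _)
      · apply Subtype.ext
        change (x j : ℚ_[p]) = (x i : ℚ_[p]) * ((x j : ℚ_[p]) / (x i : ℚ_[p]))
        field_simp
  choose c hc using hd
  refine ⟨⟨⟨fun y j => y i * c j, ?_⟩, ?_⟩, ?_, ?_, ?_⟩
  · ext j; simp
  · intro a b; ext j; simp [add_mul]
  · change Continuous (fun (y : Fin n → ℤ_[p]) j => y i * c j)
    fun_prop
  · funext j; exact (hc j).symm
  · intro h
    obtain ⟨j, hj⟩ := exists_ne i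
    have := @h.1 (Pi.single j 1) 0 (by
      funext k
      change (Pi.single j 1 : Fin n → ℤ_[p]) i * c k = (0 : Fin n → ℤ_[p]) i * c k
      simp [Pi.single_eq_of_ne hj.symm])
    have := congrFun this j
    simp at this
end

section
/- Let D be the free group on a finite set of n generators (n ≥ 1). Then the set of test elements of D is dense in the profinite topology on D: for every w ∈ D and every normal subgroup N of D of finite index, the coset wN contains a test element of D. -/
namespace TestDense

/-! ### Part 1: a retraction argument -/

section Retract
variable {α : Type*} [DecidableEq α] (H : Subgroup (FreeGroup α))

/-- a minimal length representative of the left coset of `f`. -/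
theorem exists_rep (c : FreeGroup α ⧸ H) :
    ∃ s : FreeGroup α, (s : FreeGroup α ⧸ H) = c ∧
      ∀ t : FreeGroup α, (t : FreeGroup α ⧸ H) = c → s.norm ≤ t.norm := by
  classical
  obtain ⟨t, ht⟩ := QuotientGroup.mk_surjective c
  have hne : ∃ k, ∃ s : FreeGroup α, (s : FreeGroup α ⧸ H) = c ∧ s.norm = k := ⟨_, t, ht, rfl⟩
  obtain ⟨s, hs, hk⟩ := Nat.find_spec hne
  refine ⟨s, hs, fun u hu => ?_⟩
  rw [hk]
  exact Nat.find_min' hne ⟨u, hu, rfl⟩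

noncomputable def rep (f : FreeGroup α) : FreeGroup α :=
  Classical.choose (exists_rep H (f : FreeGroup α ⧸ H))

theorem rep_mk (f : FreeGroup α) : ((rep H f : FreeGroup α) : FreeGroup α ⧸ H) = f :=
  (Classical.choose_spec (exists_rep H (f : FreeGroup α ⧸ H))).1

theorem rep_mem (f : FreeGroup α) : (rep H f)⁻¹ * f ∈ H :=
  QuotientGroup.eq.1 (rep_mk H f)

theorem rep_norm_le (f t : FreeGroup α) (h : t⁻¹ * f ∈ H) : (rep H f).norm ≤ t.norm :=
  (Classical.choose_spec (exists_rep H (f : FreeGroup α ⧸ H))).2 t (QuotientGroup.eq.2 h)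

theorem rep_congr {f f' : FreeGroup α} (h : f⁻¹ * f' ∈ H) : rep H f = rep H f' := by
  unfold rep
  have : (f : FreeGroup α ⧸ H) = f' := QuotientGroup.eq.2 h
  simp only [this]

theorem rep_one : rep H 1 = 1 := by
  have := rep_norm_le H 1 1 (by simp [H.one_mem])
  simpa using this

variable (H₀ : Subgroup (FreeGroup α))

open Classical in
/-- the modified left multiplication by a generator -/
noncomputable def sig (x f : FreeGroup α) : FreeGroup α :=
  if (rep H (x * f))⁻¹ * x * rep H f ∈ H₀ then x * f else rep H (x * f) * (rep H f)⁻¹ * f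

open Classical in
noncomputable def sigInv (x f : FreeGroup α) : FreeGroup α :=
  if (rep H f)⁻¹ * x * rep H (x⁻¹ * f) ∈ H₀ then x⁻¹ * f
  else rep H (x⁻¹ * f) * (rep H f)⁻¹ * f

theorem sig_coset (x f : FreeGroup α) : (sig H H₀ x f)⁻¹ * (x * f) ∈ H := by
  unfold sig
  split_ifs
  · simp [H.one_mem]
  · have h1 := rep_mem H (x * f)
    have h2 := H.inv_mem (rep_mem H f)
    have := H.mul_mem h2 h1
    convert this using 1
    group

theorem sigInv_coset (x f : FreeGroup α) : (sigInv H H₀ x f)⁻¹ * (x⁻¹ * f) ∈ H := by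
  unfold sigInv
  split_ifs
  · simp [H.one_mem]
  · have h1 := rep_mem H (x⁻¹ * f)
    have h2 := H.inv_mem (rep_mem H f)
    have := H.mul_mem h2 h1
    convert this using 1
    group

theorem conj_aux {a b : FreeGroup α} (x : FreeGroup α) (h : a⁻¹ * b ∈ H) :
    (x * a)⁻¹ * (x * b) ∈ H := by
  convert h using 1
  group

theorem sigInv_sig (x f : FreeGroup α) : sigInv H H₀ x (sig H H₀ x f) = f := by
  have h := sig_coset H H₀ x f
  have e1 : rep H (sig H H₀ x f) = rep H (x * f) := rep_congr H h
  have e2 : rep H (x⁻¹ * sig H H₀ x f) = rep H f := by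
    have := conj_aux H x⁻¹ h
    rw [inv_mul_cancel_left] at this
    exact rep_congr H this
  unfold sigInv
  rw [e1, e2]
  unfold sig
  split_ifs <;> group

theorem sig_sigInv (x f : FreeGroup α) : sig H H₀ x (sigInv H H₀ x f) = f := by
  have h := sigInv_coset H H₀ x f
  have e1 : rep H (sigInv H H₀ x f) = rep H (x⁻¹ * f) := rep_congr H h
  have e2 : rep H (x * sigInv H H₀ x f) = rep H f := by
    have := conj_aux H x h
    rw [mul_inv_cancel_left] at this
    exact rep_congr H this
  unfold sig
  rw [e1, e2]
  unfold sigInv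
  split_ifs <;> group

noncomputable def sigPerm (x : FreeGroup α) : Equiv.Perm (FreeGroup α) where
  toFun := sig H H₀ x
  invFun := sigInv H H₀ x
  left_inv := sigInv_sig H H₀ x
  right_inv := sig_sigInv H H₀ x

noncomputable def Th : FreeGroup α →* Equiv.Perm (FreeGroup α) :=
  FreeGroup.lift fun a => sigPerm H H₀ (FreeGroup.of a)

theorem Th_of (a : α) (f) : Th H H₀ (FreeGroup.of a) f = sig H H₀ (FreeGroup.of a) f := by
  simp [Th, sigPerm]

theorem Th_inv_of (a : α) (f) :
    Th H H₀ (FreeGroup.of a)⁻¹ f = sigInv H H₀ (FreeGroup.of a) f := by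
  simp [Th, sigPerm, Equiv.Perm.inv_def]

theorem sig_mul (x f : FreeGroup α) {k} (hk : k ∈ H) : sig H H₀ x (f * k) = sig H H₀ x f * k := by
  have e1 : rep H (f * k) = rep H f := (rep_congr H (by simpa using hk)).symm
  have e2 : rep H (x * (f * k)) = rep H (x * f) :=
    (rep_congr H (by rw [← mul_assoc]; simpa using hk)).symm
  unfold sig
  rw [e1, e2]
  split_ifs <;> group

theorem sigInv_mul (x f : FreeGroup α) {k} (hk : k ∈ H) :
    sigInv H H₀ x (f * k) = sigInv H H₀ x f * k := by
  apply (sigPerm H H₀ x).injective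
  change sig H H₀ x _ = sig H H₀ x _
  rw [sig_sigInv, sig_mul _ _ _ _ hk, sig_sigInv]

theorem Th_mul (w : FreeGroup α) : ∀ (f : FreeGroup α) {k} (_ : k ∈ H),
    Th H H₀ w (f * k) = Th H H₀ w f * k := by
  induction w using FreeGroup.induction_on with
  | C1 => simp
  | of a => intro f k hk; exact (Th_of H H₀ a _).trans ((sig_mul H H₀ _ f hk).trans (by rw [Th_of]))
  | inv_of a _ =>
    intro f k hk
    exact (Th_inv_of H H₀ a _).trans ((sigInv_mul H H₀ _ f hk).trans (by rw [Th_inv_of]))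
  | mul x y hx hy =>
    intro f k hk
    rw [map_mul (Th H H₀), Equiv.Perm.mul_apply, Equiv.Perm.mul_apply, hy f hk, hx _ hk]

/-- `Th w f` is in the coset of `w f`, and stays close to the transversal -/
theorem Th_coset (w : FreeGroup α) : ∀ (f : FreeGroup α), (rep H f)⁻¹ * f ∈ H₀ →
    (Th H H₀ w f)⁻¹ * (w * f) ∈ H ∧ (rep H (w * f))⁻¹ * Th H H₀ w f ∈ H₀ := by
  induction w using FreeGroup.induction_on with
  | C1 => intro f hf; simpa [H.one_mem] using hf
  | of a =>
    intro f hf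
    rw [Th_of]
    refine ⟨sig_coset H H₀ _ f, ?_⟩
    unfold sig
    split_ifs with h
    · convert H₀.mul_mem h hf using 1
      group
    · convert hf using 1
      group
  | inv_of a _ =>
    intro f hf
    rw [Th_inv_of]
    refine ⟨sigInv_coset H H₀ _ f, ?_⟩
    unfold sigInv
    split_ifs with h
    · convert H₀.mul_mem (H₀.inv_mem h) hf using 1
      group
    · convert hf using 1
      group
  | mul x y hx hy =>
    intro f hf
    obtain ⟨h1, h2⟩ := hy f hf
    have e := rep_congr H h1
    rw [← e] at h2
    obtain ⟨h3, h4⟩ := hx _ h2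
    rw [map_mul, Equiv.Perm.mul_apply]
    have h5 := conj_aux H x h1
    rw [← mul_assoc x y f] at h5
    refine ⟨?_, ?_⟩
    · convert H.mul_mem h3 h5 using 1
      group
    · rwa [← rep_congr H h5]

theorem Th_fix (R : ℕ) (hR : ∀ h ∈ H, h.norm ≤ R → h ∈ H₀) (v : List (α × Bool)) :
    ∀ u : List (α × Bool), FreeGroup.mk (u ++ v) ∈ H → (u ++ v).length ≤ R →
      Th H H₀ (FreeGroup.mk v) 1 = FreeGroup.mk v := by
  induction v with
  | nil => intro u _ _; rw [← FreeGroup.one_eq_mk]; simp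
  | cons a v ih =>
    intro u hu hlen
    have h1 : u ++ a :: v = (u ++ [a]) ++ v := by simp
    have IH := ih (u ++ [a]) (by rwa [← h1]) (by rwa [← h1])
    have hcons : FreeGroup.mk (a :: v) = FreeGroup.mk [a] * FreeGroup.mk v := by
      rw [FreeGroup.mul_mk]; rfl
    rw [hcons, map_mul, Equiv.Perm.mul_apply, IH]
    set f := FreeGroup.mk v with hf
    have hu' : FreeGroup.mk u * (FreeGroup.mk [a] * f) ∈ H := by
      rw [hf, FreeGroup.mul_mk, FreeGroup.mul_mk]; simpa using hu
    have n1 : (rep H f).norm ≤ v.length :=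
      (rep_norm_le H f f (by simp [H.one_mem])).trans FreeGroup.norm_mk_le
    have n2 : (rep H (FreeGroup.mk [a] * f)).norm ≤ u.length := by
      refine (rep_norm_le H _ (FreeGroup.mk u)⁻¹ (by simpa using hu')).trans ?_
      rw [FreeGroup.norm_inv_eq]
      exact FreeGroup.norm_mk_le
    have n3 : (FreeGroup.mk [a]).norm ≤ 1 := FreeGroup.norm_mk_le
    have key : (rep H (FreeGroup.mk [a] * f))⁻¹ * FreeGroup.mk [a] * rep H f ∈ H₀ := by
      apply hR
      · have m1 := rep_mem H (FreeGroup.mk [a] * f)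
        have m2 := H.inv_mem (rep_mem H f)
        convert H.mul_mem m1 m2 using 1
        group
      · have t1 := FreeGroup.norm_mul_le ((rep H (FreeGroup.mk [a] * f))⁻¹ * FreeGroup.mk [a])
          (rep H f)
        have t2 := FreeGroup.norm_mul_le (rep H (FreeGroup.mk [a] * f))⁻¹ (FreeGroup.mk [a])
        rw [FreeGroup.norm_inv_eq] at t2
        simp only [List.length_append, List.length_cons] at hlen
        omega
    obtain ⟨x, b⟩ := a
    cases b with
    | true =>
      have e : FreeGroup.mk [(x, true)] = FreeGroup.of x := rfl
      rw [e] at key ⊢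
      rw [Th_of, sig, if_pos key]
    | false =>
      have e : FreeGroup.mk [(x, false)] = (FreeGroup.of x)⁻¹ := rfl
      rw [e] at key ⊢
      rw [Th_inv_of, sigInv, if_pos]
      convert H₀.inv_mem key using 1
      group

/-- The subgroup generated by short elements of `H` is a retract of `H`. -/
theorem exists_retract (R : ℕ) (hR : ∀ h ∈ H, h.norm ≤ R → h ∈ H₀) :
    ∃ θ : H →* FreeGroup α, (∀ h, θ h ∈ H₀) ∧
      ∀ h : H, (h : FreeGroup α).norm ≤ R → θ h = h := by
  have h1 : (rep H 1)⁻¹ * 1 ∈ H₀ := by simp [rep_one, H₀.one_mem]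
  have hT : ∀ h : H, Th H H₀ h 1 ∈ H := fun h => by
    have := (Th_coset H H₀ h 1 h1).1
    rw [mul_one] at this
    have := H.mul_mem h.2 (H.inv_mem this)
    simpa using this
  refine ⟨⟨⟨fun h => Th H H₀ h 1, by simp⟩, ?_⟩, ?_, ?_⟩
  · intro h k
    have := Th_mul H H₀ h 1 (hT k)
    rw [one_mul] at this
    simp only [Subgroup.coe_mul, map_mul, Equiv.Perm.mul_apply]
    exact this
  · intro h
    have h2 := (Th_coset H H₀ h 1 h1).2
    have e : rep H ((h : FreeGroup α) * 1) = 1 := by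
      exact (rep_congr H (by simp)).symm.trans (rep_one H)
    rw [e] at h2
    simpa using h2
  · intro h hh
    have := Th_fix H H₀ R hR (h : FreeGroup α).toWord [] (by simp [FreeGroup.mk_toWord])
      (by simpa [FreeGroup.norm] using hh)
    rwa [FreeGroup.mk_toWord] at this

end Retract

theorem finite_ball {α : Type*} [DecidableEq α] [Finite α] (R : ℕ) :
    {x : FreeGroup α | x.norm ≤ R}.Finite := by
  have : Finite (α × Bool) := inferInstance
  refine Set.Finite.of_finite_image (f := FreeGroup.toWord)
    ((List.finite_length_le (α × Bool) R).subset ?_) FreeGroup.toWord_injective.injOn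
  rintro _ ⟨x, hx, rfl⟩
  exact hx

/-- If all endomorphisms fixing `g` are injective, they are all bijective. -/
theorem bijective_of_injective {α : Type*} [Finite α] (g : FreeGroup α)
    (hinj : ∀ φ : FreeGroup α →* FreeGroup α, φ g = g → Function.Injective φ)
    (φ : FreeGroup α →* FreeGroup α) (hφ : φ g = g) : Function.Bijective φ := by
  classical
  refine ⟨hinj φ hφ, ?_⟩
  let B : Set (FreeGroup α) := {x | x.norm ≤ g.norm}
  have hB : B.Finite := finite_ball _
  let P : ℕ → FreeGroup α →* FreeGroup α := fun k =>
    HPow.hPow (α := Monoid.End (FreeGroup α)) (γ := Monoid.End (FreeGroup α)) φ k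
  have P0 : ∀ x, P 0 x = x := fun x => rfl
  have Padd : ∀ j k x, P (j + k) x = P j (P k x) := fun j k x =>
    DFunLike.congr_fun (pow_add (M := Monoid.End (FreeGroup α)) φ j k) x
  have P1 : ∀ x, P 1 x = φ x := fun x =>
    DFunLike.congr_fun (pow_one (M := Monoid.End (FreeGroup α)) φ) x
  have Pg : ∀ k, P k g = g := by
    intro k
    induction k with
    | zero => rfl
    | succ k ih => rw [Padd, P1, hφ, ih]
  have Pinj : ∀ k, Function.Injective (P k) := fun k => hinj _ (Pg k)
  have gen : ∀ k, (P k).range = Subgroup.closure (((P k).range : Set (FreeGroup α)) ∩ B) := by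
    intro k
    set H := (P k).range
    set H₀ := Subgroup.closure ((H : Set (FreeGroup α)) ∩ B)
    have hle : H₀ ≤ H := (Subgroup.closure_le _).2 Set.inter_subset_left
    obtain ⟨θ, h1, h2⟩ := exists_retract H H₀ g.norm
      (fun h hh hn => Subgroup.subset_closure ⟨hh, hn⟩)
    have h3 : ∀ x (hx : x ∈ H₀), θ ⟨x, hle hx⟩ = x := by
      intro x hx
      have : H₀ ≤ (θ.eqLocus H.subtype).map H.subtype := by
        refine (Subgroup.closure_le _).2 ?_
        rintro y ⟨hy, hyB⟩
        exact ⟨⟨y, hy⟩, h2 ⟨y, hy⟩ hyB, rfl⟩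
      obtain ⟨y, hy, rfl⟩ := this hx
      exact hy
    let e : FreeGroup α ≃* H := MonoidHom.ofInjective (Pinj k)
    have he : ∀ x, ((e x : H) : FreeGroup α) = P k x := fun x => rfl
    let θ' : H →* H := θ.codRestrict H (fun h => hle (h1 h))
    let ψ : FreeGroup α →* FreeGroup α := e.symm.toMonoidHom.comp (θ'.comp e.toMonoidHom)
    have hψg : ψ g = g := by
      change e.symm (θ' (e g)) = g
      rw [MulEquiv.symm_apply_eq]
      apply Subtype.ext
      change θ (e g) = (e g : FreeGroup α)
      apply h2
      rw [he, Pg]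
    have hψ := hinj ψ hψg
    have hθ' : Function.Injective θ' := by
      intro a b hab
      have : ψ (e.symm a) = ψ (e.symm b) := by
        change e.symm (θ' (e (e.symm a))) = e.symm (θ' (e (e.symm b)))
        simp [hab]
      exact e.symm.injective (hψ this)
    apply le_antisymm _ hle
    intro x hx
    have : θ' ⟨θ ⟨x, hx⟩, hle (h1 _)⟩ = θ' ⟨x, hx⟩ := by
      apply Subtype.ext
      change θ _ = θ _
      rw [h3 _ (h1 _)]
    have := congrArg Subtype.val (hθ' this)
    change θ ⟨x, hx⟩ = x at this
    rw [← this]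
    exact h1 _
  have hfin : (Set.range fun k => (P k).range).Finite := by
    refine (hB.finite_subsets.image Subgroup.closure).subset ?_
    rintro _ ⟨k, rfl⟩
    exact ⟨_, Set.inter_subset_right, (gen k).symm⟩
  obtain ⟨j, k, hjk, h⟩ : ∃ j k, j < k ∧ (P j).range = (P k).range := by
    have : ¬ Function.Injective fun k => (P k).range := fun hi =>
      Set.infinite_range_of_injective hi hfin
    simp only [Function.Injective, not_forall] at this
    obtain ⟨a, b, hab, hne⟩ := this
    rcases lt_or_gt_of_ne hne with h | h
    · exact ⟨a, b, h, hab⟩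
    · exact ⟨b, a, h, hab.symm⟩
  intro x
  have hx : P j x ∈ (P k).range := h ▸ ⟨x, rfl⟩
  obtain ⟨y, hy⟩ := hx
  obtain ⟨d, rfl⟩ : ∃ d, k = j + (1 + d) := ⟨k - j - 1, by omega⟩
  rw [Padd] at hy
  have := Pinj j hy
  rw [Padd, P1] at this
  exact ⟨_, this⟩

end TestDense

namespace TestDense

/-! ### Part 2: free groups are residually `p` -/

theorem exists_syllables {ι : Type*} (h : FreeGroup ι) :
    ∃ L : List (ι × ℤ), (∀ s ∈ L, s.2 ≠ 0) ∧ L.IsChain (fun a b => a.1 ≠ b.1) ∧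
      h = (L.map fun s => FreeGroup.of s.1 ^ s.2).prod := by
  classical
  let w := Monoid.CoprodI.Word.equiv (freeGroupEquivCoprodI h)
  have hw : w.prod = freeGroupEquivCoprodI h := Monoid.CoprodI.Word.equiv.symm_apply_apply _
  have hh : h = freeGroupEquivCoprodI.symm w.prod := by rw [hw]; exact (freeGroupEquivCoprodI.symm_apply_apply h).symm
  have key : ∀ m : FreeGroup Unit, FreeGroup.of () ^ (FreeGroup.freeGroupUnitEquivInt m) = m :=
    fun m => FreeGroup.freeGroupUnitEquivInt.symm_apply_apply m
  refine ⟨w.toList.map fun s => (s.1, FreeGroup.freeGroupUnitEquivInt s.2), ?_, ?_, ?_⟩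
  · intro s hs
    obtain ⟨t, ht, rfl⟩ := List.mem_map.1 hs
    intro h0
    apply w.ne_one t ht
    rw [← key t.2]
    simp only at h0
    rw [h0, zpow_zero]
  · rw [List.isChain_map]
    exact w.chain_ne
  · rw [hh, Monoid.CoprodI.Word.prod, map_list_prod, List.map_map, List.map_map]
    congr 1
    apply List.map_congr_left
    intro s _
    simp only [Function.comp]
    conv_lhs => rw [← key s.2]
    simp

section Magnus
variable {ι : Type*} [DecidableEq ι] (R : Type) [CommRing R] (L : List (ι × ℤ))

/-- the elementary nilpotent operator attached to a generator -/
def NN (i : ι) : Module.End R (Fin (L.length + 1) → R) where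
  toFun f a := if (L[a.val]?).map Prod.fst = some i then
    (if h : a.val + 1 < L.length + 1 then f ⟨a.val + 1, h⟩ else 0) else 0
  map_add' f g := by
    ext a
    simp only [Pi.add_apply]
    split_ifs <;> simp
  map_smul' c f := by
    ext a
    simp only [Pi.smul_apply, RingHom.id_apply]
    split_ifs <;> simp

theorem NN_apply (i : ι) (f : Fin (L.length + 1) → R) (a) :
    NN R L i f a = if (L[a.val]?).map Prod.fst = some i then
    (if h : a.val + 1 < L.length + 1 then f ⟨a.val + 1, h⟩ else 0) else 0 := rfl

theorem NN_sq (hL : L.IsChain (fun a b => a.1 ≠ b.1)) (i : ι) : NN R L i * NN R L i = 0 := by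
  refine LinearMap.ext fun f => funext fun a => ?_
  change NN R L i (NN R L i f) a = 0
  rw [NN_apply]
  split_ifs with h1 h2
  · rw [NN_apply, if_neg]
    intro h3
    simp only at h3
    rw [Option.map_eq_some_iff] at h1 h3
    obtain ⟨x, hx, hx'⟩ := h1
    obtain ⟨y, hy, hy'⟩ := h3
    rw [List.getElem?_eq_some_iff] at hx hy
    obtain ⟨ha, hx⟩ := hx
    obtain ⟨hb, hy⟩ := hy
    have := List.isChain_iff_getElem.1 hL a.val hb
    rw [hx, hy, hx', hy'] at this
    exact this rfl
  · rfl
  · rfl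

variable {R L}
/-- strictly upper triangular operators -/
def SU {m : ℕ} (M : Module.End R (Fin m → R)) : Prop :=
  ∀ (f : Fin m → R) (t : ℕ), (∀ b : Fin m, t ≤ b.val → f b = 0) →
    ∀ b : Fin m, t ≤ b.val + 1 → M f b = 0

theorem SU.add {m : ℕ} {M M' : Module.End R (Fin m → R)} (h : SU M) (h' : SU M') :
    SU (M + M') := fun f t hf b hb => by
  rw [LinearMap.add_apply, Pi.add_apply, h f t hf b hb, h' f t hf b hb, add_zero]

theorem SU.neg {m : ℕ} {M : Module.End R (Fin m → R)} (h : SU M) :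
    SU (-M) := fun f t hf b hb => by
  rw [LinearMap.neg_apply, Pi.neg_apply, h f t hf b hb, neg_zero]

theorem SU.mul {m : ℕ} {M M' : Module.End R (Fin m → R)} (h : SU M) (h' : SU M') :
    SU (M * M') := fun f t hf b hb =>
  h (M' f) t (fun c hc => h' f t hf c (by omega)) b hb

theorem SU.pow_eq_zero {m : ℕ} {M : Module.End R (Fin m → R)} (h : SU M) : M ^ m = 0 := by
  have : ∀ k (f : Fin m → R) (b : Fin m), m ≤ b.val + k → (M ^ k) f b = 0 := by
    intro k
    induction k with
    | zero => intro f b hb; omega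
    | succ k ih =>
      intro f b hb
      rw [pow_succ']
      exact h ((M ^ k) f) (m - k) (fun c hc => ih f c (by omega)) b (by omega)
  refine LinearMap.ext fun f => funext fun b => this m f b (by omega)

theorem NN_SU (i : ι) : SU (NN R L i) := by
  intro f t hf b hb
  rw [NN_apply]
  split_ifs
  · exact hf _ hb
  · rfl
  · rfl

/-- the unit `1 + e N` -/
def uu {A : Type*} [Ring A] (N : A) (hN : N * N = 0) (e : ℤ) : Aˣ where
  val := 1 + e * N
  inv := 1 - e * N
  val_inv := by
    have : (e * N : A) * (e * N) = 0 := by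
      rw [mul_assoc, ← mul_assoc N, ← Int.cast_comm, mul_assoc, hN]; simp
    rw [add_mul, one_mul, mul_sub, mul_one, this, sub_zero, sub_add_cancel]
  inv_val := by
    have : (e * N : A) * (e * N) = 0 := by
      rw [mul_assoc, ← mul_assoc N, ← Int.cast_comm, mul_assoc, hN]; simp
    rw [sub_mul, one_mul, mul_add, mul_one, this, add_zero, add_sub_cancel_right]

theorem uu_add {A : Type*} [Ring A] (N : A) (hN : N * N = 0) (e f : ℤ) :
    uu N hN (e + f) = uu N hN e * uu N hN f := by
  apply Units.ext
  have : (e * N : A) * (f * N) = 0 := by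
    rw [mul_assoc, ← mul_assoc N, ← Int.cast_comm, mul_assoc, hN]; simp
  simp only [uu, Units.val_mul]
  rw [mul_add, mul_one, add_mul 1, one_mul, this, add_zero]
  push_cast
  rw [add_mul, add_assoc]

theorem uu_zpow {A : Type*} [Ring A] (N : A) (hN : N * N = 0) (e : ℤ) :
    uu N hN 1 ^ e = uu N hN e := by
  let F : Multiplicative ℤ →* Aˣ := MonoidHom.mk' (fun z => uu N hN z.toAdd)
    (fun a b => uu_add N hN _ _)
  have := map_zpow F (Multiplicative.ofAdd 1) e
  rw [← ofAdd_zsmul] at this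
  simpa [F] using this.symm

theorem pow_eq_one_of_nilp {A : Type*} [Ring A] (p K m : ℕ) (hp : p.Prime) (hA : (p : A) ^ K = 0)
    (M : A) (hM : M ^ m = 0) : ∃ s, (1 + M) ^ (p ^ s) = 1 := by
  obtain ⟨r, hr⟩ := exists_add_pow_prime_pow_eq hp (1 : Polynomial ℤ) Polynomial.X m
  have h1 : (p : Polynomial ℤ) ∣ (1 + Polynomial.X) ^ p ^ m - (1 + Polynomial.X ^ p ^ m) := by
    rw [hr]
    exact ⟨Polynomial.X * r, by ring⟩
  have h2 := dvd_sub_pow_of_dvd_sub h1 K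
  obtain ⟨q, hq⟩ := h2
  have h3 := congrArg (Polynomial.aeval M) hq
  have hM' : M ^ p ^ m = 0 := pow_eq_zero_of_le (Nat.lt_pow_self hp.one_lt).le hM
  simp only [map_sub, map_pow, map_add, map_one, Polynomial.aeval_X, map_mul, map_natCast, hM',
    add_zero, one_pow, pow_succ (p : A) K, hA, zero_mul] at h3
  rw [← pow_mul, ← pow_add] at h3
  exact ⟨m + K, sub_eq_zero.1 h3⟩

variable (R L) in
/-- the Magnus type representation -/
def rho (hL : L.IsChain (fun a b => a.1 ≠ b.1)) :
    FreeGroup ι →* (Module.End R (Fin (L.length + 1) → R))ˣ :=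
  FreeGroup.lift fun i => uu (NN R L i) (NN_sq R L hL i) 1

theorem rho_SU (hL : L.IsChain (fun a b => a.1 ≠ b.1)) (h : FreeGroup ι) :
    SU ((rho R L hL h : Module.End R (Fin (L.length + 1) → R)) - 1) := by
  induction h using FreeGroup.induction_on with
  | C1 => 
    simp only [map_one, Units.val_one, sub_self]
    intro f t _ b _
    rfl
  | of i => simpa [rho, uu] using NN_SU i
  | inv_of i _ =>
    have : ((rho R L hL (FreeGroup.of i)⁻¹ : (Module.End R (Fin (L.length + 1) → R))ˣ) :
      Module.End R (Fin (L.length + 1) → R)) = 1 - NN R L i := by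
      rw [map_inv]
      simp [rho, uu]
    rw [this]
    simpa using (NN_SU i).neg
  | mul x y hx hy =>
    have := ((hx.mul hy).add hx).add hy
    convert this using 1
    rw [map_mul, Units.val_mul]
    simp only [sub_mul, mul_sub, one_mul, mul_one]
    abel

theorem rho_corner (hL : L.IsChain (fun a b => a.1 ≠ b.1)) (L₂ : List (ι × ℤ)) :
    ∀ L₁, L = L₁ ++ L₂ → ∀ b : Fin (L.length + 1), b.val ≤ L₁.length →
    (rho R L hL (L₂.map fun s => FreeGroup.of s.1 ^ s.2).prod :
      Module.End R (Fin (L.length + 1) → R)) (Pi.single (Fin.last _) 1) b =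
      if b.val = L₁.length then (((L₂.map Prod.snd).prod : ℤ) : R) else 0 := by
  induction L₂ with
  | nil =>
    intro L₁ h b hb
    have hl : L.length = L₁.length := by simp [h]
    simp only [List.map_nil, List.prod_nil, map_one, Units.val_one, Module.End.one_apply]
    rw [Pi.single_apply]
    simp [Fin.ext_iff, hl]
  | cons s L₂ ih =>
    intro L₁ h b hb
    have h' : L = (L₁ ++ [s]) ++ L₂ := by simp [h]
    have IH := ih (L₁ ++ [s]) h'
    have hl : L.length = L₁.length + 1 + L₂.length := by simp [h]; omega
    simp only [List.map_cons, List.prod_cons, map_mul, Units.val_mul, Module.End.mul_apply]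
    set g := (rho R L hL (L₂.map fun s => FreeGroup.of s.1 ^ s.2).prod :
      Module.End R (Fin (L.length + 1) → R)) (Pi.single (Fin.last _) 1) with hg
    have e1 : (rho R L hL (FreeGroup.of s.1 ^ s.2) : Module.End R (Fin (L.length + 1) → R))
        = 1 + (s.2 : Module.End R (Fin (L.length + 1) → R)) * NN R L s.1 := by
      rw [map_zpow]
      simp only [rho, FreeGroup.lift_apply_of]
      rw [uu_zpow]
      rfl
    have e2 : (rho R L hL (FreeGroup.of s.1 ^ s.2) : Module.End R (Fin (L.length + 1) → R)) g b
        = g b + (s.2 : R) * NN R L s.1 g b := by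
      rw [e1]
      simp [Module.End.mul_apply]
    rw [e2, IH b (by simp; omega), if_neg (by simp; omega), zero_add, NN_apply]
    rw [dif_pos (by omega), IH _ (by simpa using hb)]
    simp only [List.length_append, List.length_singleton, Nat.add_right_cancel_iff]
    by_cases hb' : b.val = L₁.length
    · rw [if_pos hb', if_pos hb', if_pos]
      · push_cast; rfl
      · simp [h, hb']
    · simp [hb']
end Magnus

theorem residually_p {ι : Type*} (p : ℕ) (hp : p.Prime) (h : FreeGroup ι) (hh : h ≠ 1) :
    ∃ (P : Type) (_ : Group P) (_ : Finite P) (_ : IsPGroup p P) (ψ : FreeGroup ι →* P),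
      ψ h ≠ 1 := by
  classical
  obtain ⟨L, h0, hL, hprod⟩ := exists_syllables h
  set z : ℤ := (L.map Prod.snd).prod with hz
  have hz0 : z ≠ 0 := by
    rw [hz]
    apply List.prod_ne_zero
    intro hmem
    obtain ⟨s, hs, hs'⟩ := List.mem_map.1 hmem
    exact h0 s hs hs'
  have : NeZero (p ^ z.natAbs) := ⟨pow_ne_zero _ hp.ne_zero⟩
  let R := ZMod (p ^ z.natAbs)
  have hzR : (z : R) ≠ 0 := by
    intro h
    rw [ZMod.intCast_zmod_eq_zero_iff_dvd] at h
    have h2 := Int.natAbs_dvd_natAbs.2 h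
    rw [Int.natAbs_natCast] at h2
    have := Nat.le_of_dvd (by omega) h2
    exact absurd this (not_le.2 (Nat.lt_pow_self hp.one_lt))
  let E := Module.End R (Fin (L.length + 1) → R)
  have hfE : Finite E := Finite.of_injective (fun f : E => (f : (Fin (L.length + 1) → R) → _))
    DFunLike.coe_injective
  have hfU : Finite Eˣ := inferInstance
  let P := (rho R L hL).range
  refine ⟨P, inferInstance, inferInstance, ?_, (rho R L hL).rangeRestrict, ?_⟩
  · rintro ⟨_, x, rfl⟩
    have hE : ((p : ℕ) : E) ^ z.natAbs = 0 := by
      have h1 : ((p : ℕ) : R) ^ z.natAbs = 0 := by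
        rw [← Nat.cast_pow]; exact ZMod.natCast_self _
      have h2 := congrArg (algebraMap R E) h1
      rwa [map_pow, map_natCast, map_zero] at h2
    obtain ⟨s, hs⟩ := pow_eq_one_of_nilp p _ _ hp hE _ (rho_SU (R := R) hL x).pow_eq_zero
    refine ⟨s, ?_⟩
    apply Subtype.ext
    apply Units.ext
    rw [add_sub_cancel] at hs
    exact hs
  · intro h1
    have h2 : rho R L hL h = 1 := congrArg Subtype.val h1
    have h3 := rho_corner (R := R) hL L [] rfl 0 (by simp)
    rw [← hprod, h2] at h3
    simp only [Units.val_one, Module.End.one_apply, Fin.val_zero, List.length_nil, if_true] at h3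
    rw [Pi.single_apply, if_neg] at h3
    · exact hzR h3.symm
    · intro h4
      have : L.length = 0 := by simpa [Fin.ext_iff] using h4.symm
      apply hh
      rw [hprod, List.length_eq_zero_iff.1 this]
      rfl

end TestDense

namespace TestDense

theorem exists_char {p : ℕ} [Fact p.Prime] {Q : Type*} [Group Q] [Finite Q] (hQ : IsPGroup p Q)
    (S : Subgroup Q) (hS : S ≠ ⊤) :
    ∃ χ : Q →* Multiplicative (ZMod p), χ ≠ 1 ∧ ∀ x ∈ S, χ x = 1 := by
  obtain ⟨M, hM, hSM⟩ := (eq_top_or_exists_le_coatom S).resolve_left hS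
  have hnil := hQ.isNilpotent
  have hnorm : M.Normal :=
    Subgroup.NormalizerCondition.normal_of_coatom _ Group.normalizerCondition_of_isNilpotent hM
  obtain ⟨a, ha⟩ := (IsPGroup.iff_card (p := p)).1 (hQ.to_subgroup M)
  obtain ⟨b, hb⟩ := (IsPGroup.iff_card (p := p)).1 hQ
  have hp := (Fact.out : p.Prime)
  have hab : a < b := by
    by_contra hle
    push Not at hle
    apply hM.1
    apply Subgroup.eq_top_of_le_card
    rw [ha, hb]
    exact Nat.pow_le_pow_right hp.pos hle
  obtain ⟨K, hK, hMK⟩ := Sylow.exists_subgroup_card_pow_succ (p := p) (n := a)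
    (hb ▸ pow_dvd_pow p hab) ha
  have hKtop : K = ⊤ := by
    apply hM.2
    refine lt_of_le_of_ne hMK ?_
    rintro rfl
    rw [ha] at hK
    exact absurd (Nat.pow_right_injective hp.two_le hK) (by omega)
  have hcard : Nat.card (Q ⧸ M) = p := by
    have h1 := M.card_eq_card_quotient_mul_card_subgroup
    rw [hKtop, Subgroup.card_top] at hK
    rw [hK, ha, pow_succ'] at h1
    exact (Nat.eq_of_mul_eq_mul_right (pow_pos hp.pos a) h1).symm
  let e : (Q ⧸ M) ≃* Multiplicative (ZMod p) :=
    mulEquivOfPrimeCardEq (p := p) hcard (by simp)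
  refine ⟨e.toMonoidHom.comp (QuotientGroup.mk' M), ?_, ?_⟩
  · intro h
    apply hM.1
    rw [eq_top_iff]
    intro x _
    have := DFunLike.congr_fun h x
    simp only [MonoidHom.comp_apply, MonoidHom.one_apply] at this
    have h2 : QuotientGroup.mk' M x = 1 := e.injective (by simpa using this)
    exact (QuotientGroup.eq_one_iff x).1 h2
  · intro x hx
    have h2 : QuotientGroup.mk' M x = 1 := (QuotientGroup.eq_one_iff x).2 (hSM hx)
    simp [MonoidHom.comp_apply] at h2 ⊢
    exact hSM hx

theorem injective_of_mod_p {α : Type*} [Finite α] (p : ℕ) [Fact p.Prime]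
    (φ : FreeGroup α →* FreeGroup α)
    (hφ : ∀ l : FreeGroup α →* Multiplicative (ZMod p), l.comp φ = 1 → l = 1)
    (hres : ∀ h : FreeGroup α, h ≠ 1 →
      ∃ (P : Type) (_ : Group P) (_ : Finite P) (_ : IsPGroup p P) (ψ : FreeGroup α →* P),
      ψ h ≠ 1) :
    Function.Injective φ := by
  rw [injective_iff_map_eq_one]
  intro h hh
  by_contra hne
  obtain ⟨P, _, _, hP, ψ, hψ⟩ := hres h hne
  have hfin : Finite (FreeGroup α →* P) := Finite.of_equiv (α → P) FreeGroup.lift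
  have hinj : Function.Injective (fun ψ : FreeGroup α →* P => ψ.comp φ) := by
    intro ψ₁ ψ₂ h12
    have hPP : IsPGroup p (P × P) := by
      intro x
      obtain ⟨a, ha⟩ := hP x.1
      obtain ⟨b, hb⟩ := hP x.2
      refine ⟨a + b, Prod.ext ?_ ?_⟩
      · simp [pow_add, pow_mul, ha]
      · simp [pow_add, mul_comm (p ^ a), pow_mul, hb]
    let π := ψ₁.prod ψ₂
    let Q := π.range
    have hQ : IsPGroup p Q := hPP.to_subgroup Q
    let π' : FreeGroup α →* Q := π.rangeRestrict
    have htop : (π'.comp φ).range = ⊤ := by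
      by_contra hS
      obtain ⟨χ, h1, h2⟩ := exists_char hQ _ hS
      apply h1
      have := hφ (χ.comp π') (by ext x; exact congrArg _ (h2 _ ⟨_, rfl⟩))
      refine MonoidHom.ext fun q => ?_
      obtain ⟨x, rfl⟩ := π.rangeRestrict_surjective q
      exact DFunLike.congr_fun this x
    refine MonoidHom.ext fun x => ?_
    obtain ⟨y, hy⟩ : π' x ∈ (π'.comp φ).range := htop ▸ Subgroup.mem_top _
    have hy' : π (φ y) = π x := congrArg Subtype.val hy
    have h3 : ψ₁ (φ y) = ψ₁ x := congrArg Prod.fst hy'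
    have h4 : ψ₂ (φ y) = ψ₂ x := congrArg Prod.snd hy'
    rw [← h3, ← h4]
    exact DFunLike.congr_fun h12 y
  obtain ⟨ψ', h'⟩ := Finite.surjective_of_injective hinj ψ
  apply hψ
  rw [← h']
  simp [hh]

/-- the wreath product of `ZMod p` with itself -/
@[ext]
structure Wr (p : ℕ) where
  f : ZMod p → ZMod p
  c : ZMod p

namespace Wr
variable {p : ℕ}

instance : Mul (Wr p) := ⟨fun a b => ⟨fun t => a.f t + b.f (t + a.c), a.c + b.c⟩⟩
instance : One (Wr p) := ⟨⟨fun _ => 0, 0⟩⟩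
instance : Inv (Wr p) := ⟨fun a => ⟨fun t => -a.f (t - a.c), -a.c⟩⟩

theorem mul_f (a b : Wr p) (t) : (a * b).f t = a.f t + b.f (t + a.c) := rfl
theorem mul_c (a b : Wr p) : (a * b).c = a.c + b.c := rfl
theorem one_f (t) : (1 : Wr p).f t = 0 := rfl
theorem one_c : (1 : Wr p).c = 0 := rfl
theorem inv_f (a : Wr p) (t) : (a⁻¹).f t = -a.f (t - a.c) := rfl
theorem inv_c (a : Wr p) : (a⁻¹).c = -a.c := rfl

instance : Group (Wr p) := Group.ofLeftAxioms
  (fun a b c => by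
    apply Wr.ext
    · funext t; simp only [mul_f, mul_c]; rw [add_assoc, add_assoc]
    · simp only [mul_c, add_assoc])
  (fun a => by
    apply Wr.ext
    · funext t; simp only [mul_f, one_f, one_c, add_zero, zero_add]
    · simp only [mul_c, one_c, zero_add])
  (fun a => by
    apply Wr.ext
    · funext t
      simp only [mul_f, inv_f, inv_c, one_f]
      rw [← sub_eq_add_neg, neg_add_cancel]
    · simp only [mul_c, inv_c, one_c, neg_add_cancel])

theorem pow_c (a : Wr p) (k : ℕ) : (a ^ k).c = k * a.c := by
  induction k with
  | zero => simp [one_c]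
  | succ k ih => rw [pow_succ, mul_c, ih]; push_cast; ring

theorem pow_f (a : Wr p) (k : ℕ) (t) :
    (a ^ k).f t = ∑ i ∈ Finset.range k, a.f (t + i * a.c) := by
  induction k with
  | zero => simp [one_f]
  | succ k ih => rw [pow_succ, mul_f, ih, pow_c, Finset.sum_range_succ]

theorem pow_p_c (a : Wr p) : (a ^ p).c = 0 := by rw [pow_c]; simp

variable [Fact p.Prime]

theorem sum_range_eq (g : ZMod p → ZMod p) :
    ∑ i ∈ Finset.range p, g (i : ZMod p) = ∑ x, g x := by
  refine Finset.sum_bij (fun i _ => (i : ZMod p)) (by simp) ?_ ?_ (by simp)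
  · intro a ha b hb h
    rw [ZMod.natCast_eq_natCast_iff'] at h
    rwa [Nat.mod_eq_of_lt (Finset.mem_range.1 ha), Nat.mod_eq_of_lt (Finset.mem_range.1 hb)] at h
  · intro x _
    exact ⟨x.val, Finset.mem_range.2 x.val_lt, by simp⟩

theorem pow_p_f_zero (a : Wr p) (h : a.c = 0) (t) : (a ^ p).f t = 0 := by
  rw [pow_f]; simp [h]

theorem pow_p_f (a : Wr p) (h : a.c ≠ 0) (t) : (a ^ p).f t = ∑ x, a.f x := by
  rw [pow_f, sum_range_eq (fun i => a.f (t + i * a.c))]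
  exact Fintype.sum_equiv ((Equiv.mulRight₀ a.c h).trans (Equiv.addLeft t)) _ _ (fun x => rfl)

theorem pow_sq (a : Wr p) : a ^ (p ^ 2) = 1 := by
  rw [sq, pow_mul]
  apply Wr.ext
  · funext t
    rw [pow_p_f_zero _ (pow_p_c a)]; rfl
  · rw [pow_p_c]; rfl

theorem pow_p_eq_one (a : Wr p) (h : ∑ x, a.f x = 0) : a ^ p = 1 := by
  apply Wr.ext
  · funext t
    by_cases hc : a.c = 0
    · rw [pow_p_f_zero _ hc]; rfl
    · rw [pow_p_f _ hc, h]; rfl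
  · rw [pow_p_c]; rfl

/-- total sum homomorphism -/
def tot : Wr p →* Multiplicative (ZMod p) := MonoidHom.mk' (fun a => Multiplicative.ofAdd (∑ x, a.f x))
  (fun a b => by
    rw [← ofAdd_add]
    congr 1
    simp only [mul_f, Finset.sum_add_distrib]
    congr 1
    exact Fintype.sum_equiv (Equiv.addRight a.c) _ _ (fun x => rfl))

theorem tot_apply (a : Wr p) : tot a = Multiplicative.ofAdd (∑ x, a.f x) := rfl
end Wr

theorem mod_p_of_fix {n : ℕ} (p : ℕ) [Fact p.Prime] (g : FreeGroup (Fin n))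
    (hg : ∀ ρ : FreeGroup (Fin n) →* Wr p,
      ρ g = ρ ((List.finRange n).map fun i => FreeGroup.of i ^ p).prod)
    (φ : FreeGroup (Fin n) →* FreeGroup (Fin n)) (hφ : φ g = g)
    (l : FreeGroup (Fin n) →* Multiplicative (ZMod p)) (hl : l.comp φ = 1) : l = 1 := by
  refine FreeGroup.ext_hom _ _ fun i => ?_
  by_contra hi
  let ρ : FreeGroup (Fin n) →* Wr p := FreeGroup.lift fun j =>
    ⟨Pi.single 0 (l (FreeGroup.of j)).toAdd, if j = i then 1 else 0⟩
  have hρ : ∀ j, ρ (FreeGroup.of j) =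
    ⟨Pi.single 0 (l (FreeGroup.of j)).toAdd, if j = i then 1 else 0⟩ := fun j => by simp [ρ]
  have htot : Wr.tot.comp ρ = l := by
    refine FreeGroup.ext_hom _ _ fun j => ?_
    rw [MonoidHom.comp_apply, hρ, Wr.tot_apply]
    simp
  have h1 : ρ ((List.finRange n).map fun i => FreeGroup.of i ^ p).prod = 1 := by
    rw [← hg, ← hφ]
    have := hg (ρ.comp φ)
    rw [MonoidHom.comp_apply] at this
    rw [this, map_list_prod]
    apply List.prod_eq_one
    intro x hx
    simp only [List.map_map, List.mem_map] at hx
    obtain ⟨j, _, rfl⟩ := hx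
    simp only [Function.comp, map_pow]
    apply Wr.pow_p_eq_one
    have h2 : Wr.tot (ρ (φ (FreeGroup.of j))) = 1 := by
      have := DFunLike.congr_fun htot (φ (FreeGroup.of j))
      rw [MonoidHom.comp_apply] at this
      rw [this]
      exact DFunLike.congr_fun hl (FreeGroup.of j)
    rw [Wr.tot_apply] at h2
    exact ofAdd_eq_one.1 h2
  rw [map_list_prod, List.map_map, List.prod_map_eq_pow_single i] at h1
  · rw [List.count_eq_one_of_mem (List.nodup_finRange n) (List.mem_finRange i), pow_one] at h1
    simp only [Function.comp, map_pow] at h1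
    have h2 := congrArg (fun a => Wr.f a 0) h1
    rw [Wr.pow_p_f _ (by simp [hρ]), Wr.one_f, hρ] at h2
    apply hi
    simpa using h2
  · intro j hj _
    simp only [Function.comp, map_pow]
    apply Wr.ext
    · funext t
      rw [Wr.pow_p_f_zero _ (by simp [hρ, hj])]; rfl
    · rw [Wr.pow_p_c]; rfl


end TestDense

theorem stmt_17 {n : ℕ} (hn : 1 ≤ n) (w : FreeGroup (Fin n))
    (N : Subgroup (FreeGroup (Fin n))) (hN : N.Normal) (hNfin : N.index ≠ 0) :
    ∃ t : FreeGroup (Fin n), (∃ u ∈ N, t = w * u) ∧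
      ∀ φ : FreeGroup (Fin n) →* FreeGroup (Fin n), φ t = t → Function.Bijective φ := by
  obtain ⟨p, hpN, hp⟩ := Nat.exists_infinite_primes (N.index + 1)
  have : Fact p.Prime := ⟨hp⟩
  have hcop : Nat.Coprime N.index (p ^ 2) := by
    apply Nat.Coprime.pow_right
    rw [Nat.coprime_comm, hp.coprime_iff_not_dvd]
    intro hd
    have := Nat.le_of_dvd (Nat.pos_of_ne_zero hNfin) hd
    omega
  set v : FreeGroup (Fin n) := ((List.finRange n).map fun i => FreeGroup.of i ^ p).prod with hv
  have hpowN : ∀ x : FreeGroup (Fin n), x ^ N.index ∈ N := fun x => N.pow_index_mem x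
  obtain ⟨x, y, hxy⟩ : ∃ x y : ℤ, (N.index : ℤ) * x + (p ^ 2 : ℕ) * y = 1 := by
    have := Int.isCoprime_iff_gcd_eq_one.2 (show Int.gcd (N.index : ℤ) ((p ^ 2 : ℕ) : ℤ) = 1 by
      rw [Int.gcd_natCast_natCast]; exact hcop)
    obtain ⟨a, b, hab⟩ := this
    exact ⟨a, b, by rw [← hab]; ring⟩
  have hNz : ∀ (z : FreeGroup (Fin n)) (k : ℤ), z ^ ((N.index : ℤ) * k) ∈ N := fun z k => by
    rw [zpow_mul, zpow_natCast]
    exact N.zpow_mem (hpowN z) k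
  have hWz : ∀ (z : TestDense.Wr p) (k : ℤ), z ^ (((p ^ 2 : ℕ) : ℤ) * k) = 1 := fun z k => by
    rw [zpow_mul, zpow_natCast, TestDense.Wr.pow_sq, one_zpow]
  refine ⟨w ^ (((p ^ 2 : ℕ) : ℤ) * y) * v ^ ((N.index : ℤ) * x),
    ⟨w ^ ((N.index : ℤ) * (-x)) * v ^ ((N.index : ℤ) * x), N.mul_mem (hNz _ _) (hNz _ _), ?_⟩, ?_⟩
  · rw [← mul_assoc, ← zpow_one_add]
    congr 2
    linarith
  · apply TestDense.bijective_of_injective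
    intro φ hφ
    apply TestDense.injective_of_mod_p p φ _ (TestDense.residually_p p hp)
    refine TestDense.mod_p_of_fix p _ (fun ρ => ?_) φ hφ
    rw [map_mul, map_zpow, map_zpow, hWz, one_mul, ← hv]
    have : (N.index : ℤ) * x = 1 + ((p ^ 2 : ℕ) : ℤ) * (-y) := by linarith
    rw [this, zpow_add, zpow_one, hWz, mul_one]
end
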